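/- Every octahedral system without isolated vertex on 5 colour classes of 5 points each (d = 4) has at least 14 edges. That is, if E ⊆ (Fin 5 → Fin 5) is a finite set of colourful edges satisfying the octahedral parity property and such that every vertex (i, p) ∈ Fin 5 × Fin 5 belongs to some edge, then |E| ≥ 14. -/

import Mathlib

namespace ColourfulDepth

/-- A colourful edge on `d+1` colour classes, each a copy of `Fin (d+1)`:
`e i` is the chosen point of colour `i`. -/
abbrev Edge (d : ℕ) := Fin (d + 1) → Fin (d + 1)

/-- The number of edges of `H` using points from the `î`-octahedron `{t, t'}`
with `i`-th coordinate `s`. -/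
def usesCount (d : ℕ) (H : Finset (Edge d)) (i : Fin (d + 1)) (t t' : Edge d)
    (s : Fin (d + 1)) : ℕ :=
  (H.filter (fun e => e i = s ∧ ∀ j, j ≠ i → (e j = t j ∨ e j = t' j))).card

/-- `H` is an octahedral system: for every colour `i`, every `î`-octahedron
`{t, t'}` (a pair of `î`-transversals with `t j ≠ t' j` for all `j ≠ i`), and
all `s, s'`, the numbers of edges using points from the octahedron with `i`-th
coordinate `s` resp. `s'` have the same parity. -/
def IsOctahedralSystem (d : ℕ) (H : Finset (Edge d)) : Prop :=
  ∀ i : Fin (d + 1), ∀ t t' : Edge d, (∀ j, j ≠ i → t j ≠ t' j) →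
    ∀ s s' : Fin (d + 1),
      usesCount d H i t t' s % 2 = usesCount d H i t t' s' % 2

/-- `H` has no isolated vertex: every point of every colour lies in some edge. -/
def NoIsolatedVertex (d : ℕ) (H : Finset (Edge d)) : Prop :=
  ∀ i p : Fin (d + 1), ∃ e ∈ H, e i = p

/-- The entry `T_H(t, x)` of the large table: the parity of the number of edges
`e ∈ H` with `e 0 = x` and `e j ∈ {0, t j}` for all `j ≠ 0`. -/
def tableEntry (d : ℕ) (H : Finset (Edge d)) (t : Edge d) (x : Fin (d + 1)) : ZMod 2 :=
  ((H.filter (fun e => e 0 = x ∧ ∀ j, j ≠ 0 → (e j = 0 ∨ e j = t j))).card : ZMod 2)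

/-- The score of `H`: the number of pairs `(t, x)` where `t` is a
`0̂`-transversal disjoint from `t₀ = (∗,0,…,0)` (normalized by `t 0 = 0`),
`x ≠ 0`, and the entry `T_H(t, x)` disagrees with `T_H(t, 0)`. -/
def score (d : ℕ) (H : Finset (Edge d)) : ℕ :=
  (Finset.univ.filter (fun p : Edge d × Fin (d + 1) =>
    p.1 0 = 0 ∧ (∀ j, j ≠ 0 → p.1 j ≠ 0) ∧ p.2 ≠ 0 ∧
      tableEntry d H p.1 p.2 ≠ tableEntry d H p.1 0)).card

/-- `z(e)`: the number of coordinates of `e` equal to `0`. -/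
def zcount (d : ℕ) (e : Edge d) : ℕ :=
  (Finset.univ.filter (fun i : Fin (d + 1) => e i = 0)).card

end ColourfulDepth

/-!
The link of a vertex `x` of colour `i` is the hypergraph on the other colours formed by the edges
through `x`. Octahedral systems are closed under symmetric differences of two links of the same
colour, and a nonempty octahedral system has at least `q` edges if every colour has `q` points.

Fix one link `A` of colour `i` and put `B y = link y ∆ A`. Then `|link y| ≥ |B y| - |A|`, and
`link y = A` if `B y` is empty, so `|H| ≥ q |A| + ∑ (|B y| - 2 |A|)` over the nonempty `B y`.
If some colour `j ≠ i` is covered by `H` but by none of the `B y`, then each of the at least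
`q - |A|` points of colour `j` missed by `A` lies in `q` edges, so `|H| ≥ q (q - |A|)`. Otherwise
the covered colours other than `i` are distributed among the `B y`. By induction on the number of
colours, `|H| ≥ k (q - 2) + 2` whenever `k ≥ 1` colours are covered and `2 k ≤ q + 2`. Applying
this to the `B y` and summing once more gives `|H| ≥ (q - 1) (q + 2) / 2` if `q` is odd and at
least `q` colours are covered.
-/

namespace ColourfulDepth

open Finset
open scoped symmDiff

section SymmDiff

variable {β : Type*} [DecidableEq β]

lemma card_symmDiff_add_two_mul_card_inter (s t : Finset β) :
    #(s ∆ t) + 2 * #(s ∩ t) = #s + #t := by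
  have hunion : #(s ∆ t) = #(s \ t) + #(t \ s) := card_union_of_disjoint disjoint_sdiff_sdiff
  have hs := card_sdiff_add_card_inter s t
  have ht := card_sdiff_add_card_inter t s
  rw [inter_comm] at ht
  omega

lemma even_card_symmDiff_iff {s t : Finset β} : Even #(s ∆ t) ↔ Even (#s + #t) := by
  simp [← card_symmDiff_add_two_mul_card_inter, Nat.even_add]

lemma card_symmDiff_le (s t : Finset β) : #(s ∆ t) ≤ #s + #t := by
  have := card_symmDiff_add_two_mul_card_inter s t
  omega

end SymmDiff

variable {n : ℕ} {α : Type*}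

/-- The link of the vertex `x` of colour `i`: the edges of `H` through `x`, with the colour `i`
removed and the remaining colours renumbered by `i.succAbove`. -/
noncomputable def link (i : Fin (n + 1)) (x : α) (H : Finset (Fin (n + 1) → α)) :
    Finset (Fin n → α) :=
  H.preimage (fun f => i.insertNth x f)
    (Fin.insertNth_right_injective (α := fun _ => α) x).injOn

@[simp]
lemma mem_link {i : Fin (n + 1)} {x : α} {H : Finset (Fin (n + 1) → α)} {f : Fin n → α} :
    f ∈ link i x H ↔ i.insertNth x f ∈ H := by
  simp [link]

lemma removeNth_mem_link {i : Fin (n + 1)} {H : Finset (Fin (n + 1) → α)} {e : Fin (n + 1) → α}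
    (he : e ∈ H) : i.removeNth e ∈ link i (e i) H := by
  simpa

lemma card_filter_link [DecidableEq α] (i : Fin (n + 1)) (x : α) (H : Finset (Fin (n + 1) → α))
    (P : (Fin n → α) → Prop) [DecidablePred P] :
    #{f ∈ link i x H | P f} = #{e ∈ H | e i = x ∧ P (i.removeNth e)} := by
  refine card_nbij' (fun f => i.insertNth x f) i.removeNth ?_ ?_ ?_ ?_
  · intro f hf
    simpa using hf
  · intro e he
    simp only [coe_filter, Set.mem_ofPred_eq, mem_link] at he ⊢
    rw [← he.2.1, Fin.insertNth_self_removeNth]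
    exact ⟨he.1, he.2.2⟩
  · intro f _
    simp
  · intro e he
    simp only [coe_filter, Set.mem_ofPred_eq] at he
    simp [← he.2.1]

lemma card_link [DecidableEq α] (i : Fin (n + 1)) (x : α) (H : Finset (Fin (n + 1) → α)) :
    #(link i x H) = #{e ∈ H | e i = x} := by
  simpa using card_filter_link i x H fun _ => True

lemma card_link_le (i : Fin (n + 1)) (x : α) (H : Finset (Fin (n + 1) → α)) :
    #(link i x H) ≤ #H := by
  classical
  exact (card_link i x H).trans_le (card_filter_le _ _)

lemma card_filter_link_le [DecidableEq α] (i : Fin (n + 1)) (x : α)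
    (H : Finset (Fin (n + 1) → α)) (k : Fin n) (p : α) :
    #{f ∈ link i x H | f k = p} ≤ #{e ∈ H | e (i.succAbove k) = p} := by
  rw [card_filter_link]
  exact card_le_card (monotone_filter_right _ fun e _ he => he.2)

lemma sum_card_link [Fintype α] (i : Fin (n + 1)) (H : Finset (Fin (n + 1) → α)) :
    ∑ x, #(link i x H) = #H := by
  classical
  simp only [card_link]
  exact (card_eq_sum_card_fiberwise fun e _ => mem_coe.2 (mem_univ (e i))).symm

lemma card_mul_card_link_le [Fintype α] {H : Finset (Fin (n + 1) → α)} {i : Fin (n + 1)} {x : α}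
    (hx : ∀ y, #(link i x H) ≤ #(link i y H)) : Fintype.card α * #(link i x H) ≤ #H := by
  rw [← sum_card_link i H, ← smul_eq_mul]
  exact card_nsmul_le_sum _ _ _ fun y _ => hx y

variable [DecidableEq α]

section Octahedral

/-- The number of edges of `H` using points from the octahedron spanned by `t` and `t'`. -/
def boxCount (H : Finset (Fin n → α)) (t t' : Fin n → α) : ℕ :=
  #{e ∈ H | ∀ j, e j = t j ∨ e j = t' j}

lemma boxCount_eq_add (H : Finset (Fin (n + 1) → α)) {t t' : Fin (n + 1) → α} {i : Fin (n + 1)}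
    (hi : t i ≠ t' i) :
    boxCount H t t' = boxCount (link i (t i) H) (i.removeNth t) (i.removeNth t') +
      boxCount (link i (t' i) H) (i.removeNth t) (i.removeNth t') := by
  simp only [boxCount, card_filter_link]
  rw [← card_union_of_disjoint, ← filter_or]
  · simp only [← or_and_right, Fin.forall_iff_succAbove i, Fin.removeNth]
  · exact disjoint_filter.2 fun e _ h h' => hi (h.1.symm.trans h'.1)

lemma even_boxCount_symmDiff_iff {G H : Finset (Fin n → α)} {t t' : Fin n → α} :
    Even (boxCount (G ∆ H) t t') ↔ Even (boxCount G t t' + boxCount H t t') := by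
  rw [boxCount, boxCount, boxCount, ← even_card_symmDiff_iff]
  congr! 2
  ext f
  simp only [mem_filter, mem_symmDiff]
  tauto

/-- Octahedral systems on `n` colour classes that are copies of `α`, in the symmetric form: two
transversals of all the colours that are disjoint span an even number of edges. -/
def IsOctahedral (H : Finset (Fin n → α)) : Prop :=
  ∀ t t' : Fin n → α, (∀ j, t j ≠ t' j) → Even (boxCount H t t')

lemma isOctahedral_empty : IsOctahedral (∅ : Finset (Fin n → α)) := fun _ _ _ => by
  simp [boxCount]

lemma IsOctahedral.eq_empty_of_zero {H : Finset (Fin 0 → α)} (hH : IsOctahedral H) : H = ∅ := by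
  have heven : Even #H := by
    simpa [boxCount] using hH Fin.elim0 Fin.elim0 fun j => j.elim0
  have hle : #H ≤ 1 := card_le_one_of_subsingleton H
  rw [← card_eq_zero]
  rcases heven with ⟨r, hr⟩
  omega

lemma IsOctahedral.link_symmDiff_link {H : Finset (Fin (n + 1) → α)} (hH : IsOctahedral H)
    (i : Fin (n + 1)) (x y : α) : IsOctahedral (link i x H ∆ link i y H) := by
  obtain rfl | hxy := eq_or_ne x y
  · simpa using isOctahedral_empty
  · intro t t' ht
    let u : Fin (n + 1) → α := i.insertNth x t
    let u' : Fin (n + 1) → α := i.insertNth y t'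
    have hdisj : ∀ j, u j ≠ u' j := by
      simpa [u, u', Fin.forall_iff_succAbove i] using ⟨hxy, ht⟩
    have heven := hH u u' hdisj
    rw [boxCount_eq_add H (hdisj i)] at heven
    simpa [u, u', even_boxCount_symmDiff_iff] using heven

/-- The colours all of whose points lie in an edge of `H`. -/
def coveredColours [Fintype α] (H : Finset (Fin n → α)) : Finset (Fin n) :=
  {j | ∀ p, ∃ e ∈ H, e j = p}

variable [Fintype α]

@[simp]
lemma mem_coveredColours {H : Finset (Fin n → α)} {j : Fin n} :
    j ∈ coveredColours H ↔ ∀ p, ∃ e ∈ H, e j = p := by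
  simp [coveredColours]

lemma mem_coveredColours_iff_link {H : Finset (Fin (n + 1) → α)} {i : Fin (n + 1)} :
    i ∈ coveredColours H ↔ ∀ p, (link i p H).Nonempty := by
  simp only [mem_coveredColours, ← card_pos, card_link]
  simp [card_pos, filter_nonempty_iff]

@[simp]
lemma coveredColours_empty [Nonempty α] : coveredColours (∅ : Finset (Fin n → α)) = ∅ := by
  ext
  simp

lemma card_le_card_of_mem_coveredColours {H : Finset (Fin n → α)} {j : Fin n}
    (hj : j ∈ coveredColours H) : Fintype.card α ≤ #H := by
  rw [mem_coveredColours] at hj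
  calc Fintype.card α = #(H.image fun e => e j) := by
        rw [← card_univ, eq_comm]
        congr 1
        ext p
        simpa using hj p
    _ ≤ #H := card_image_le

lemma IsOctahedral.link_of_notMem {H : Finset (Fin (n + 1) → α)} (hH : IsOctahedral H)
    {i : Fin (n + 1)} (hi : i ∉ coveredColours H) (x : α) : IsOctahedral (link i x H) := by
  simp only [mem_coveredColours_iff_link, not_forall, not_nonempty_iff_eq_empty] at hi
  obtain ⟨z, hz⟩ := hi
  simpa [hz, ← bot_eq_empty] using hH.link_symmDiff_link i x z

theorem IsOctahedral.card_le_of_nonempty {H : Finset (Fin n → α)} (hH : IsOctahedral H)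
    (hne : H.Nonempty) : Fintype.card α ≤ #H := by
  induction n with
  | zero => exact absurd hH.eq_empty_of_zero hne.ne_empty
  | succ n ih =>
    by_cases h0 : 0 ∈ coveredColours H
    · exact card_le_card_of_mem_coveredColours h0
    · obtain ⟨e, he⟩ := hne
      exact (ih (hH.link_of_notMem h0 (e 0)) ⟨_, removeNth_mem_link he⟩).trans (card_link_le ..)

lemma IsOctahedral.card_le_card_filter_of_notMem {H : Finset (Fin n → α)} (hH : IsOctahedral H)
    {j : Fin n} (hj : j ∉ coveredColours H) {e : Fin n → α} (he : e ∈ H) :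
    Fintype.card α ≤ #{f ∈ H | f j = e j} := by
  cases n with
  | zero => exact j.elim0
  | succ n =>
    rw [← card_link]
    exact (hH.link_of_notMem hj (e j)).card_le_of_nonempty ⟨_, removeNth_mem_link he⟩

section SymmDiffLink

variable {H : Finset (Fin (n + 1) → α)} {i : Fin (n + 1)} {x : α}

lemma IsOctahedral.card_le_card_filter_of_symmDiff_link (hH : IsOctahedral H) {k : Fin n}
    {e : Fin (n + 1) → α} (he : e ∈ H)
    (hk : k ∉ coveredColours (link i (e i) H ∆ link i x H))
    (hx : ∀ f ∈ link i x H, f k ≠ e (i.succAbove k)) :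
    Fintype.card α ≤ #{e' ∈ H | e' (i.succAbove k) = e (i.succAbove k)} := by
  have hmem : i.removeNth e ∈ link i (e i) H ∆ link i x H :=
    mem_symmDiff.2 (.inl ⟨removeNth_mem_link he, fun h => hx _ h rfl⟩)
  calc Fintype.card α ≤ #{f ∈ link i (e i) H ∆ link i x H | f k = e (i.succAbove k)} :=
        (hH.link_symmDiff_link i _ _).card_le_card_filter_of_notMem hk hmem
    _ ≤ #{f ∈ link i (e i) H | f k = e (i.succAbove k)} := by
        refine card_le_card fun f hf => ?_
        rw [mem_filter, mem_symmDiff] at hf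
        exact mem_filter.2 ⟨(hf.1.resolve_right fun h => hx f h.1 hf.2).1, hf.2⟩
    _ ≤ #{e' ∈ H | e' (i.succAbove k) = e (i.succAbove k)} := card_filter_link_le ..

lemma IsOctahedral.exists_mem_coveredColours_symmDiff_link (hH : IsOctahedral H) {k : Fin n}
    (hk : i.succAbove k ∈ coveredColours H)
    (hlt : #H < Fintype.card α * (Fintype.card α - #(link i x H))) :
    ∃ y, k ∈ coveredColours (link i y H ∆ link i x H) := by
  by_contra! hno
  let missed : Finset α := ((link i x H).image fun f => f k)ᶜ
  have hcard : Fintype.card α - #(link i x H) ≤ #missed := by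
    rw [card_compl]
    exact Nat.sub_le_sub_left card_image_le _
  have hdeg : ∀ p ∈ missed, Fintype.card α ≤ #(link (i.succAbove k) p H) := by
    intro p hp
    obtain ⟨e, he, rfl⟩ := mem_coveredColours.1 hk p
    rw [card_link]
    refine hH.card_le_card_filter_of_symmDiff_link he (hno _) ?_
    simpa [missed] using hp
  refine hlt.not_ge ?_
  calc Fintype.card α * (Fintype.card α - #(link i x H)) ≤ #missed • Fintype.card α := by
        rw [mul_comm, smul_eq_mul]
        gcongr
    _ ≤ ∑ p ∈ missed, #(link (i.succAbove k) p H) := card_nsmul_le_sum _ _ _ hdeg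
    _ ≤ ∑ p, #(link (i.succAbove k) p H) := sum_le_sum_of_subset (subset_univ _)
    _ = #H := sum_card_link _ _

/-- The hypothesis on the nonempty `link y ∆ link x` gives `#(link x) + c * l ≤ #(link y)` for every
`y`, where `l` is the number of colours in `K` covered by `link y ∆ link x`; sum over `y`. -/
lemma IsOctahedral.card_mul_card_link_add_le (hH : IsOctahedral H) {K : Finset (Fin n)}
    (hK : ∀ k ∈ K, i.succAbove k ∈ coveredColours H)
    (hlt : #H < Fintype.card α * (Fintype.card α - #(link i x H))) {c : ℚ} (hc : 0 ≤ c)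
    (hge : ∀ y, (link i y H ∆ link i x H).Nonempty →
      2 * #(link i x H) + c * #(K ∩ coveredColours (link i y H ∆ link i x H)) ≤
        #(link i y H ∆ link i x H)) :
    Fintype.card α * #(link i x H) + c * #K ≤ #H := by
  have : Nonempty α := ⟨x⟩
  let covers (y : α) : Finset (Fin n) := K ∩ coveredColours (link i y H ∆ link i x H)
  have hlink (y : α) : #(link i x H) + c * #(covers y) ≤ (#(link i y H) : ℚ) := by
    obtain hempty | hne := (link i y H ∆ link i x H).eq_empty_or_nonempty
    · rw [show covers y = ∅ by simp [covers, hempty], symmDiff_eq_bot.1 hempty]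
      simp
    · have hle : (#(link i y H ∆ link i x H) : ℚ) ≤ #(link i y H) + #(link i x H) :=
        mod_cast card_symmDiff_le _ _
      linarith [hge y hne]
  have hcovers : #K ≤ ∑ y, #(covers y) := by
    refine (card_le_card fun k hk => ?_).trans card_biUnion_le
    obtain ⟨y, hy⟩ := hH.exists_mem_coveredColours_symmDiff_link (hK k hk) hlt
    exact mem_biUnion.2 ⟨y, mem_univ y, mem_inter.2 ⟨hk, hy⟩⟩
  calc (Fintype.card α * #(link i x H) + c * #K : ℚ)
      ≤ Fintype.card α * #(link i x H) + c * ∑ y, (#(covers y) : ℚ) := by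
        gcongr
        exact mod_cast hcovers
    _ = ∑ y, (#(link i x H) + c * #(covers y) : ℚ) := by
        simp [sum_add_distrib, mul_sum]
    _ ≤ ∑ y, (#(link i y H) : ℚ) := sum_le_sum fun y _ => hlink y
    _ = #H := mod_cast sum_card_link i H

end SymmDiffLink

lemma card_filter_succAbove_mem_add_one {K : Finset (Fin (n + 1))} {i : Fin (n + 1)} (hi : i ∈ K) :
    #{k | i.succAbove k ∈ K} + 1 = #K := by
  rw [← card_erase_add_one hi, ← card_map i.succAboveEmb]
  congr 2
  ext j
  obtain rfl | ⟨k, rfl⟩ := i.eq_self_or_eq_succAbove j <;> simp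

/-- Here `a` is the smallest size of a link of some colour in `K`, and `B` ranges over the symmetric
differences of such a link with the others. -/
lemma IsOctahedral.exists_card_mul_add_le [Nonempty α] {H : Finset (Fin (n + 1) → α)}
    (hH : IsOctahedral H) {K : Finset (Fin (n + 1))} (hK : K ⊆ coveredColours H)
    (hne : K.Nonempty) :
    ∃ a : ℕ, 1 ≤ a ∧ Fintype.card α * a ≤ #H ∧
      (#H < Fintype.card α * (Fintype.card α - a) → ∀ c : ℚ, 0 ≤ c →
        (∀ B : Finset (Fin n → α), IsOctahedral B → B.Nonempty →
          ∀ L ⊆ coveredColours B, #L < #K → 2 * a + c * #L ≤ #B) →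
        Fintype.card α * a + c * (#K - 1) ≤ #H) := by
  obtain ⟨i, hi⟩ := hne
  obtain ⟨x, -, hx⟩ := exists_min_image univ (fun x => #(link i x H)) univ_nonempty
  refine ⟨#(link i x H), card_pos.2 (mem_coveredColours_iff_link.1 (hK hi) x),
    card_mul_card_link_le fun y => hx y (mem_univ y), fun hlt c hc hB => ?_⟩
  have hcard := card_filter_succAbove_mem_add_one hi
  have hKcard : (#{k | i.succAbove k ∈ K} : ℚ) = #K - 1 := by
    rw [← hcard]
    simp
  rw [← hKcard]
  refine hH.card_mul_card_link_add_le (fun k hk => hK (mem_filter.1 hk).2) hlt hc fun y hy => ?_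
  refine hB _ (hH.link_symmDiff_link i y x) hy _ inter_subset_right ?_
  exact (card_le_card inter_subset_left).trans_lt (by omega)

lemma IsOctahedral.two_mul_add_mul_le_card {B : Finset (Fin n → α)} (hB : IsOctahedral B)
    (hne : B.Nonempty) {a l : ℕ} (ha : 1 ≤ a) (haq : 2 * a ≤ Fintype.card α)
    (hl : 1 ≤ l → l * Fintype.card α + 2 ≤ #B + 2 * l) :
    2 * a + (Fintype.card α - 2 * a) * l ≤ (#B : ℚ) := by
  have hqB : (Fintype.card α : ℚ) ≤ #B := mod_cast hB.card_le_of_nonempty hne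
  have haq' : (2 * a : ℚ) ≤ Fintype.card α := mod_cast haq
  obtain rfl | hl1 := l.eq_zero_or_pos
  · simpa using haq'.trans hqB
  · have hlB : (l * Fintype.card α + 2 : ℚ) ≤ #B + 2 * l := mod_cast hl hl1
    have hslack : (0 : ℚ) ≤ (a - 1) * (l - 1) :=
      mul_nonneg (sub_nonneg.2 (mod_cast ha)) (sub_nonneg.2 (mod_cast hl1))
    linarith

theorem IsOctahedral.card_mul_card_add_two_le {H : Finset (Fin n → α)}
    (hH : IsOctahedral H) {K : Finset (Fin n)} (hK : K ⊆ coveredColours H) (hne : K.Nonempty)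
    (hsmall : 2 * #K ≤ Fintype.card α + 2) : #K * Fintype.card α + 2 ≤ #H + 2 * #K := by
  induction n with
  | zero => exact hne.choose.elim0
  | succ n ih =>
    obtain hone | htwo : #K = 1 ∨ 2 ≤ #K := by
      have := hne.card_pos
      omega
    · obtain ⟨i, hi⟩ := hne
      have := card_le_card_of_mem_coveredColours (hK hi)
      rw [hone]
      omega
    by_contra! hcon
    have : Nonempty α := Fintype.card_pos_iff.1 (by omega)
    obtain ⟨a, ha, hmul, hrec⟩ := hH.exists_card_mul_add_le hK hne
    have hsq : 2 * #H < Fintype.card α * Fintype.card α := by nlinarith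
    have haq : 2 * a < Fintype.card α := by nlinarith
    have hlt : #H < Fintype.card α * (Fintype.card α - a) := by
      have : Fintype.card α ≤ 2 * (Fintype.card α - a) := by omega
      nlinarith
    have haq' : (0 : ℚ) ≤ Fintype.card α - 2 * a := sub_nonneg.2 (mod_cast haq.le)
    have hbound := hrec hlt (Fintype.card α - 2 * a) haq' fun B hB hBne L hL hLK =>
      hB.two_mul_add_mul_le_card hBne ha haq.le fun hL1 => ih hB hL (card_pos.1 hL1) (by omega)
    have hcon' : (#H + 2 * #K : ℚ) < #K * Fintype.card α + 2 := mod_cast hcon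
    have hslack : (0 : ℚ) ≤ (a - 1) * (Fintype.card α + 2 - 2 * #K) :=
      mul_nonneg (sub_nonneg.2 (mod_cast ha)) (sub_nonneg.2 (mod_cast hsmall))
    linarith

lemma IsOctahedral.two_mul_add_mul_card_le_card {s a : ℕ}
    (hα : Fintype.card α = 2 * s + 1) (ha : 1 ≤ a) (has : a ≤ s) {c : ℚ}
    (hc : c * (2 * s) = s * (2 * s + 3) - (2 * s + 1) * a)
    {B : Finset (Fin n → α)} (hB : IsOctahedral B) (hne : B.Nonempty) {L : Finset (Fin n)}
    (hL : L ⊆ coveredColours B) (hLs : #L ≤ 2 * s) : 2 * a + c * #L ≤ #B := by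
  have ha1 : (1 : ℚ) ≤ a := mod_cast ha
  have has' : (a : ℚ) ≤ s := mod_cast has
  have hs : (0 : ℚ) < 2 * s := by linarith
  have hs1 : (0 : ℚ) ≤ 2 * s - 1 := by linarith
  obtain hle | hge := le_total #L (s + 1)
  · have hcle : c ≤ 2 * s + 1 - 2 * a := by
      refine le_of_mul_le_mul_right ?_ hs
      rw [hc]
      linarith [mul_nonneg hs1 (sub_nonneg.2 has')]
    have hlin := hB.two_mul_add_mul_le_card (l := #L) hne ha (by omega) fun hL1 =>
      hB.card_mul_card_add_two_le hL (card_pos.1 hL1) (by omega)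
    rw [hα] at hlin
    push_cast at hlin
    linarith [mul_le_mul_of_nonneg_right hcle (#L).cast_nonneg]
  · obtain ⟨M, hML, hM⟩ := exists_subset_card_eq hge
    have hMB := hB.card_mul_card_add_two_le (hML.trans hL) (card_pos.1 (by omega)) (by omega)
    rw [hM, hα] at hMB
    have hMB' : ((s + 1) * (2 * s + 1) + 2 : ℚ) ≤ #B + 2 * (s + 1) := mod_cast hMB
    have hc0 : 0 ≤ c := by
      refine nonneg_of_mul_nonneg_left ?_ hs
      nlinarith
    have hcL : c * #L ≤ c * (2 * s) := mul_le_mul_of_nonneg_left (mod_cast hLs) hc0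
    linarith [mul_nonneg hs1 (sub_nonneg.2 ha1)]

theorem IsOctahedral.mul_le_card_of_card_eq {s : ℕ} (hα : Fintype.card α = 2 * s + 1)
    {H : Finset (Fin (n + 1) → α)} (hH : IsOctahedral H)
    (hcov : 2 * s + 1 ≤ #(coveredColours H)) : s * (2 * s + 3) ≤ #H := by
  by_contra! hcon
  have : Nonempty α := Fintype.card_pos_iff.1 (by omega)
  obtain ⟨K, hK, hKcard⟩ := exists_subset_card_eq hcov
  obtain ⟨a, ha, hmul, hrec⟩ := hH.exists_card_mul_add_le hK (card_pos.1 (by omega))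
  rw [hα] at hmul hrec
  have has : a ≤ s := by nlinarith
  have hlt : #H < (2 * s + 1) * (2 * s + 1 - a) := by
    have : s + 1 ≤ 2 * s + 1 - a := by omega
    nlinarith
  -- The slope for which the resulting lower bound on `H` is exactly `s * (2 * s + 3)`.
  obtain ⟨c, hc⟩ : ∃ c : ℚ, c * (2 * s) = s * (2 * s + 3) - (2 * s + 1) * a :=
    ⟨_, div_mul_cancel₀ _ (by simp; omega)⟩
  have hc0 : 0 ≤ c := by
    have has' : (a : ℚ) ≤ s := mod_cast has
    have hs : (0 : ℚ) < 2 * s := by simp; omega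
    refine nonneg_of_mul_nonneg_left ?_ hs
    nlinarith
  have hbound := hrec hlt c hc0 fun B hB hBne L hL hLK =>
    hB.two_mul_add_mul_card_le_card hα ha has hc hBne hL (by omega)
  have hcon' : (#H : ℚ) < s * (2 * s + 3) := mod_cast hcon
  rw [hKcard] at hbound
  push_cast at hbound
  linarith

end Octahedral

lemma usesCount_eq_boxCount (d : ℕ) (H : Finset (Edge d)) (i : Fin (d + 1)) (t t' : Edge d)
    (x : Fin (d + 1)) :
    usesCount d H i t t' x = boxCount (link i x H) (i.removeNth t) (i.removeNth t') := by
  simp only [usesCount, boxCount, card_filter_link]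
  refine congrArg Finset.card (filter_congr fun e _ => and_congr_right fun _ => ?_)
  simp [Fin.forall_iff_succAbove i, Fin.removeNth]

lemma IsOctahedralSystem.isOctahedral {d : ℕ} {H : Finset (Edge d)}
    (hH : IsOctahedralSystem d H) : IsOctahedral H := by
  intro t t' ht
  have hpar := hH 0 t t' (fun j _ => ht j) (t 0) (t' 0)
  rw [boxCount_eq_add H (ht 0), ← usesCount_eq_boxCount, ← usesCount_eq_boxCount, Nat.even_iff]
  omega

lemma NoIsolatedVertex.coveredColours_eq_univ {d : ℕ} {H : Finset (Edge d)}
    (hH : NoIsolatedVertex d H) : coveredColours H = univ :=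
  eq_univ_of_forall fun i => mem_coveredColours.2 (hH i)

end ColourfulDepth

open ColourfulDepth in
theorem octahedral_system_dim_four_ge_fourteen_general {d : ℕ} (hd : Even d)
    {H : Finset (Edge d)} (hoct : IsOctahedralSystem d H) (hniv : NoIsolatedVertex d H) :
    d * (d + 3) ≤ 2 * H.card := by
  obtain ⟨s, rfl⟩ := even_iff_exists_two_mul.1 hd
  have hcard : s * (2 * s + 3) ≤ H.card :=
    hoct.isOctahedral.mul_le_card_of_card_eq (by simp) (by simp [hniv.coveredColours_eq_univ])
  linarith

open ColourfulDepth in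
/-- **ν(4) ≥ 14.**  Every octahedral system without isolated vertex on five
colour classes of five points each (`d = 4`) has at least `14` edges. -/
theorem octahedral_system_dim_four_ge_fourteen
    (H : Finset (Edge 4))
    (hoct : IsOctahedralSystem 4 H)
    (hniv : NoIsolatedVertex 4 H) :
    14 ≤ H.card := by
  have := octahedral_system_dim_four_ge_fourteen_general (by decide) hoct hniv
  omega
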